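/- arXiv:2009.08606 — 5 statements merged into one kernel-verified Lean document; each statement's English description precedes it below -/
import Mathlib

section
/- Let L, X₁, X₂, X₃, X₄ be random variables on a probability space, each taking only the values 0 and 1, each with nonzero variance, and suppose that for every pair i ≠ j the variables Xᵢ and Xⱼ are conditionally independent given L. Then the three vanishing tetrad constraints hold: Corr(X₁,X₂)·Corr(X₃,X₄) = Corr(X₁,X₃)·Corr(X₂,X₄) = Corr(X₁,X₄)·Corr(X₂,X₃). -/
open MeasureTheory ProbabilityTheory

/-- Covariance: Cov(X,Y) = E[XY] − E[X]E[Y]. -/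
noncomputable def cov {Ω : Type*} [MeasurableSpace Ω] (μ : Measure Ω) (X Y : Ω → ℝ) : ℝ :=
  (∫ ω, X ω * Y ω ∂μ) - (∫ ω, X ω ∂μ) * (∫ ω, Y ω ∂μ)

/-- Standard deviation: the square root of the variance Cov(X,X). -/
noncomputable def stdDev {Ω : Type*} [MeasurableSpace Ω] (μ : Measure Ω) (X : Ω → ℝ) : ℝ :=
  Real.sqrt (cov μ X X)

/-- Pearson correlation coefficient: Corr(X,Y) = Cov(X,Y)/(stdDev(X)·stdDev(Y)). -/
noncomputable def corr {Ω : Type*} [MeasurableSpace Ω] (μ : Measure Ω) (X Y : Ω → ℝ) : ℝ :=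
  cov μ X Y / (stdDev μ X * stdDev μ Y)

/-- A binary random variable takes only the values 0 and 1. -/
def IsBinary {Ω : Type*} (X : Ω → ℝ) : Prop := ∀ ω, X ω = 0 ∨ X ω = 1

/-- Conditional independence of `X` and `Y` given `L`:
`P(X = x, Y = y | L = l) = P(X = x | L = l) · P(Y = y | L = l)` for all values `x, y, l`
with `P(L = l) > 0`. -/
def CondIndepGiven {Ω : Type*} [MeasurableSpace Ω] (μ : Measure Ω) (X Y L : Ω → ℝ) : Prop :=
  ∀ x y l : ℝ, μ {ω | L ω = l} ≠ 0 →
    μ ({ω | X ω = x} ∩ {ω | Y ω = y} ∩ {ω | L ω = l}) / μ {ω | L ω = l} =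
      (μ ({ω | X ω = x} ∩ {ω | L ω = l}) / μ {ω | L ω = l}) *
        (μ ({ω | Y ω = y} ∩ {ω | L ω = l}) / μ {ω | L ω = l})

/-!
Let `A` be the event that the two-valued latent variable takes its first value. By the law of total
covariance for the partition `{A, Aᶜ}`, the covariance of two variables that are independent given
the latent one reduces to `P(A) P(Aᶜ) (E[X|A] - E[X|Aᶜ]) (E[Y|A] - E[Y|Aᶜ])`. Correlations of
distinct measured variables are therefore products `ρ i * ρ j` of individual loadings, and each
tetrad product equals `ρ 0 * ρ 1 * ρ 2 * ρ 3`.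
-/

lemma rangeFactorization_preimage_singleton {α β : Type*} (f : α → β) (y : Set.range f) :
    Set.rangeFactorization f ⁻¹' {y} = f ⁻¹' {y.1} := by
  ext x
  simp only [Set.mem_preimage, Set.mem_singleton_iff, Subtype.ext_iff, Set.rangeFactorization_coe]

section Independence

variable {Ω β γ : Type*} [MeasurableSpace Ω] [MeasurableSpace β] [MeasurableSpace γ]
  [MeasurableSingletonClass β] [MeasurableSingletonClass γ] {μ : Measure Ω} [IsFiniteMeasure μ]
  {X : Ω → β} {Y : Ω → γ}

lemma indepFun_of_measure_inter_preimage_singleton_eq_mul [Countable β] [Countable γ]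
    (hX : Measurable X) (hY : Measurable Y)
    (h : ∀ x y, μ (X ⁻¹' {x} ∩ Y ⁻¹' {y}) = μ (X ⁻¹' {x}) * μ (Y ⁻¹' {y})) :
    X ⟂ᵢ[μ] Y := by
  rw [indepFun_iff_map_prod_eq_prod_map_map hX.aemeasurable hY.aemeasurable]
  refine Measure.ext_of_singleton fun ⟨x, y⟩ ↦ ?_
  rw [← Set.singleton_prod_singleton, Measure.prod_prod,
    Measure.map_apply (hX.prodMk hY) ((measurableSet_singleton x).prod (measurableSet_singleton y)),
    Measure.map_apply hX (measurableSet_singleton x),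
    Measure.map_apply hY (measurableSet_singleton y), Set.mk_preimage_prod]
  exact h x y

lemma indepFun_of_countable_range (hX : Measurable X) (hY : Measurable Y)
    (hXc : (Set.range X).Countable) (hYc : (Set.range Y).Countable)
    (h : ∀ x y, μ (X ⁻¹' {x} ∩ Y ⁻¹' {y}) = μ (X ⁻¹' {x}) * μ (Y ⁻¹' {y})) :
    X ⟂ᵢ[μ] Y := by
  have := hXc.to_subtype
  have := hYc.to_subtype
  have indep_factors : Set.rangeFactorization X ⟂ᵢ[μ] Set.rangeFactorization Y :=
    indepFun_of_measure_inter_preimage_singleton_eq_mul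
      hX.rangeFactorization hY.rangeFactorization
      fun x y ↦ by simpa only [rangeFactorization_preimage_singleton] using h x y
  exact indep_factors.comp measurable_subtype_coe measurable_subtype_coe

end Independence

lemma IsBinary.countable_range {Ω : Type*} {X : Ω → ℝ} (hX : IsBinary X) :
    (Set.range X).Countable :=
  ((Set.toFinite {0, 1}).subset (Set.range_subset_iff.mpr hX)).countable

section TwoValuedFactor

variable {Ω : Type*} [MeasurableSpace Ω] {μ : Measure Ω} {A : Set Ω} {L X Y : Ω → ℝ}

lemma IsBinary.memLp [IsFiniteMeasure μ] (hX : IsBinary X) (hXm : Measurable X) (p : ENNReal) :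
    MemLp X p μ :=
  MemLp.of_bound hXm.aestronglyMeasurable 1 <| Filter.Eventually.of_forall fun ω ↦ by
    rcases hX ω with h | h <;> simp [h]

lemma CondIndepGiven.indepFun_cond [IsFiniteMeasure μ] (h : CondIndepGiven μ X Y L)
    (hL : Measurable L) (hX : Measurable X) (hY : Measurable Y)
    (hXc : (Set.range X).Countable) (hYc : (Set.range Y).Countable) (l : ℝ) :
    X ⟂ᵢ[μ[|L ⁻¹' {l}]] Y := by
  refine indepFun_of_countable_range hX hY hXc hYc fun x y ↦ ?_
  have cond_eq_div (B : Set Ω) : μ[B | L ⁻¹' {l}] = μ (B ∩ L ⁻¹' {l}) / μ (L ⁻¹' {l}) := by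
    rw [cond_apply (hL (measurableSet_singleton l)), Set.inter_comm, ENNReal.div_eq_inv_mul]
  by_cases hl : μ (L ⁻¹' {l}) = 0
  · simp only [cond_eq_zero_of_meas_eq_zero hl, Measure.coe_zero, Pi.zero_apply, mul_zero]
  · simp only [cond_eq_div]
    exact h x y l hl

lemma CondIndepGiven.indepFun_cond_compl [IsFiniteMeasure μ] (h : CondIndepGiven μ X Y L)
    (hL : Measurable L) (hX : Measurable X) (hY : Measurable Y)
    (hXc : (Set.range X).Countable) (hYc : (Set.range Y).Countable) {a b : ℝ}
    (hab : ∀ ω, L ω = a ∨ L ω = b) : X ⟂ᵢ[μ[|(L ⁻¹' {a})ᶜ]] Y := by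
  rcases eq_or_ne a b with rfl | hne
  · have compl_eq_empty : (L ⁻¹' {a})ᶜ = ∅ :=
      Set.compl_empty_iff.mpr (Set.eq_univ_of_forall fun ω ↦ (hab ω).elim id id)
    rw [compl_eq_empty, cond_empty, indepFun_iff_measure_inter_preimage_eq_mul]
    simp only [Measure.coe_zero, Pi.zero_apply, mul_zero, implies_true]
  · have compl_eq : (L ⁻¹' {a})ᶜ = L ⁻¹' {b} := by
      ext ω
      exact ⟨(hab ω).resolve_left, fun hb ha ↦ hne (ha.symm.trans hb)⟩
    rw [compl_eq]
    exact h.indepFun_cond hL hX hY hXc hYc b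

lemma cov_eq_zero_of_indepFun (h : X ⟂ᵢ[μ] Y) (hX : AEStronglyMeasurable X μ)
    (hY : AEStronglyMeasurable Y μ) : cov μ X Y = 0 :=
  sub_eq_zero.mpr (h.integral_fun_mul_eq_mul_integral hX hY)

section TotalExpectation

variable {E : Type*} [NormedAddCommGroup E] [NormedSpace ℝ E] [IsFiniteMeasure μ]

lemma measureReal_smul_integral_cond (f : Ω → E) :
    μ.real A • ∫ ω, f ω ∂μ[|A] = ∫ ω in A, f ω ∂μ := by
  by_cases hA : μ A = 0
  · rw [measureReal_def, hA, ENNReal.toReal_zero, zero_smul, setIntegral_measure_zero f hA]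
  · have hA' : μ.real A ≠ 0 := (measureReal_ne_zero_iff).mpr hA
    rw [ProbabilityTheory.cond, integral_smul_measure, ENNReal.toReal_inv, ← measureReal_def,
      smul_inv_smul₀ hA']

lemma integral_eq_add_integral_cond_compl {f : Ω → E} (hA : MeasurableSet A)
    (hf : Integrable f μ) :
    ∫ ω, f ω ∂μ = μ.real A • ∫ ω, f ω ∂μ[|A] + μ.real Aᶜ • ∫ ω, f ω ∂μ[|Aᶜ] := by
  rw [measureReal_smul_integral_cond, measureReal_smul_integral_cond, integral_add_compl hA hf]

end TotalExpectation

variable [IsProbabilityMeasure μ]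

lemma cov_eq_cond_add_cond_compl (hA : MeasurableSet A) (hX : Integrable X μ)
    (hY : Integrable Y μ) (hXY : Integrable (fun ω ↦ X ω * Y ω) μ) :
    cov μ X Y = μ.real A * cov μ[|A] X Y + μ.real Aᶜ * cov μ[|Aᶜ] X Y +
      μ.real A * μ.real Aᶜ * (μ[|A][X] - μ[|Aᶜ][X]) * (μ[|A][Y] - μ[|Aᶜ][Y]) := by
  simp only [cov, integral_eq_add_integral_cond_compl hA hX,
    integral_eq_add_integral_cond_compl hA hY, integral_eq_add_integral_cond_compl hA hXY,
    smul_eq_mul, probReal_compl_eq_one_sub hA]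
  ring

/-- The factor loading of `X` on the partition `{A, Aᶜ}`: the standardized difference of the two
conditional means. For `0 < μ A < 1` it is the correlation of `X` with the indicator of `A`; it is
`0` when `A` or `Aᶜ` is null. -/
noncomputable def loading (μ : Measure Ω) (A : Set Ω) (X : Ω → ℝ) : ℝ :=
  √(μ.real A * μ.real Aᶜ) * (μ[|A][X] - μ[|Aᶜ][X]) / stdDev μ X

lemma corr_eq_loading_mul_loading (hA : MeasurableSet A) (hX : MemLp X 2 μ) (hY : MemLp Y 2 μ)
    (h : X ⟂ᵢ[μ[|A]] Y) (h' : X ⟂ᵢ[μ[|Aᶜ]] Y) :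
    corr μ X Y = loading μ A X * loading μ A Y := by
  have cov_cond : cov μ[|A] X Y = 0 := cov_eq_zero_of_indepFun h
    (hX.1.mono_ac cond_absolutelyContinuous) (hY.1.mono_ac cond_absolutelyContinuous)
  have cov_cond_compl : cov μ[|Aᶜ] X Y = 0 := cov_eq_zero_of_indepFun h'
    (hX.1.mono_ac cond_absolutelyContinuous) (hY.1.mono_ac cond_absolutelyContinuous)
  have sqrt_mul_self : √(μ.real A * μ.real Aᶜ) * √(μ.real A * μ.real Aᶜ) =
      μ.real A * μ.real Aᶜ := Real.mul_self_sqrt (by positivity)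
  rw [corr, loading, loading, div_mul_div_comm, mul_mul_mul_comm, sqrt_mul_self,
    cov_eq_cond_add_cond_compl hA (hX.integrable one_le_two) (hY.integrable one_le_two)
      (hX.integrable_mul hY), cov_cond, cov_cond_compl]
  ring

end TwoValuedFactor

theorem binary_one_factor_model_tetrad_constraints_general
    {Ω : Type*} [MeasurableSpace Ω] (μ : Measure Ω) [IsProbabilityMeasure μ]
    (L : Ω → ℝ) (X : Fin 4 → Ω → ℝ) {a b : ℝ}
    (hL : Measurable L) (hX : ∀ i, Measurable (X i))
    (hab : ∀ ω, L ω = a ∨ L ω = b) (hXc : ∀ i, (Set.range (X i)).Countable)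
    (hX2 : ∀ i, MemLp (X i) 2 μ) (hXvar : ∀ i, cov μ (X i) (X i) ≠ 0)
    (hCI : ∀ i j : Fin 4, i ≠ j → CondIndepGiven μ (X i) (X j) L) :
    corr μ (X 0) (X 1) * corr μ (X 2) (X 3) = corr μ (X 0) (X 2) * corr μ (X 1) (X 3) ∧
      corr μ (X 0) (X 2) * corr μ (X 1) (X 3) = corr μ (X 0) (X 3) * corr μ (X 1) (X 2) := by
  have corr_eq (i j : Fin 4) (hij : i ≠ j) : corr μ (X i) (X j) =
      loading μ (L ⁻¹' {a}) (X i) * loading μ (L ⁻¹' {a}) (X j) :=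
    corr_eq_loading_mul_loading (hL (measurableSet_singleton a)) (hX2 i) (hX2 j)
      ((hCI i j hij).indepFun_cond hL (hX i) (hX j) (hXc i) (hXc j) a)
      ((hCI i j hij).indepFun_cond_compl hL (hX i) (hX j) (hXc i) (hXc j) hab)
  rw [corr_eq 0 1 (by decide), corr_eq 2 3 (by decide), corr_eq 0 2 (by decide),
    corr_eq 1 3 (by decide), corr_eq 0 3 (by decide), corr_eq 1 2 (by decide)]
  constructor <;> ring

theorem binary_one_factor_model_tetrad_constraints
    {Ω : Type*} [MeasurableSpace Ω] (μ : Measure Ω) [IsProbabilityMeasure μ]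
    (L : Ω → ℝ) (X : Fin 4 → Ω → ℝ)
    (hL : Measurable L) (hX : ∀ i, Measurable (X i))
    (hLbin : IsBinary L) (hXbin : ∀ i, IsBinary (X i))
    (hLvar : cov μ L L ≠ 0) (hXvar : ∀ i, cov μ (X i) (X i) ≠ 0)
    (hCI : ∀ i j : Fin 4, i ≠ j → CondIndepGiven μ (X i) (X j) L) :
    corr μ (X 0) (X 1) * corr μ (X 2) (X 3) = corr μ (X 0) (X 2) * corr μ (X 1) (X 3) ∧
      corr μ (X 0) (X 2) * corr μ (X 1) (X 3) = corr μ (X 0) (X 3) * corr μ (X 1) (X 2) :=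
  binary_one_factor_model_tetrad_constraints_general μ L X hL hX hLbin
    (fun i ↦ (hXbin i).countable_range) (fun i ↦ (hXbin i).memLp (hX i) 2) hXvar hCI
end

section
/- Let X and Z be independent standard normal random variables, let ρ ∈ (−1, 1), and define Y = ρ·X + √(1 − ρ²)·Z. Let V = 1_{X > 0} and W = 1_{Y > 0} be the median-dichotomy indicators. Then Cov(V, W) = arcsin(ρ)/(2π). -/
open MeasureTheory ProbabilityTheory

/-!
In polar coordinates the density of a centred isotropic Gaussian vector is a function of the radius
alone, so the probability of a planar cone is the angle it subtends divided by `2π`. The half-planes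
with inner normals at angles `a ≤ b ≤ a + π` meet in a sector of opening `π - (b - a)`. The events
`X > 0` and `Y > 0` are such half-planes with `a = 0` and `b = arccos ρ`, whence
`Cov(V, W) = (π - arccos ρ) / (2π) - 1/4`.
-/

open Set
open scoped NNReal Real

section PolarCoordinates

variable {E : Type*} [NormedAddCommGroup E] [NormedSpace ℝ E] {v : ℝ≥0} {f : ℝ × ℝ → E}

theorem integral_eq_smul_of_polar_separable {F : ℝ × ℝ → E} {g : ℝ → ℝ} {h : ℝ → E}
    (hF : ∀ r > 0, ∀ θ, F (r * Real.cos θ, r * Real.sin θ) = g r • h θ) :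
    ∫ p, F p = (∫ r in Ioi 0, r * g r) • ∫ θ in Ioo (-π) π, h θ := by
  rw [← integral_comp_polarCoord_symm, polarCoord_target, Measure.volume_eq_prod,
    ← integral_prod_smul, Measure.prod_restrict]
  refine setIntegral_congr_fun (measurableSet_Ioi.prod measurableSet_Ioo) ?_
  rintro ⟨r, θ⟩ ⟨hr, -⟩
  simp only [polarCoord_symm_apply, hF r hr θ, smul_smul]

theorem gaussianPDFReal_mul_polar (v : ℝ≥0) (r θ : ℝ) :
    gaussianPDFReal 0 v (r * Real.cos θ) * gaussianPDFReal 0 v (r * Real.sin θ) =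
      (2 * π * v)⁻¹ * Real.exp (-r ^ 2 / (2 * v)) := by
  simp only [gaussianPDFReal, sub_zero]
  rw [mul_mul_mul_comm, ← Real.exp_add, ← mul_inv, Real.mul_self_sqrt (by positivity)]
  congr 2
  linear_combination (-r ^ 2 / (2 * v)) * Real.sin_sq_add_cos_sq θ

theorem integral_gaussianReal_prod (hv : v ≠ 0) (f : ℝ × ℝ → E) :
    ∫ p, f p ∂(gaussianReal 0 v).prod (gaussianReal 0 v) =
      ∫ p : ℝ × ℝ, (gaussianPDFReal 0 v p.1 * gaussianPDFReal 0 v p.2) • f p := by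
  rw [gaussianReal_of_var_ne_zero 0 hv,
    prod_withDensity (measurable_gaussianPDF _ _) (measurable_gaussianPDF _ _),
    integral_withDensity_eq_integral_toReal_smul (by fun_prop)
      (.of_forall fun p ↦ ENNReal.mul_lt_top gaussianPDF_lt_top gaussianPDF_lt_top)]
  simp only [ENNReal.toReal_mul, toReal_gaussianPDF, Measure.volume_eq_prod]

theorem integral_gaussianReal_prod_eq_radial_smul_angular (hv : v ≠ 0)
    (hf : ∀ r > (0 : ℝ), ∀ p, f (r • p) = f p) :
    ∫ p, f p ∂(gaussianReal 0 v).prod (gaussianReal 0 v) =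
      (∫ r in Ioi (0 : ℝ), r * ((2 * π * v)⁻¹ * Real.exp (-r ^ 2 / (2 * v)))) •
        ∫ θ in Ioo (-π) π, f (Real.cos θ, Real.sin θ) := by
  rw [integral_gaussianReal_prod hv]
  refine integral_eq_smul_of_polar_separable
    (g := fun r ↦ (2 * π * v)⁻¹ * Real.exp (-r ^ 2 / (2 * v)))
    (h := fun θ ↦ f (Real.cos θ, Real.sin θ)) fun r hr θ ↦ ?_
  have hfr : f (r * Real.cos θ, r * Real.sin θ) = f (Real.cos θ, Real.sin θ) :=
    hf r hr (Real.cos θ, Real.sin θ)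
  rw [gaussianPDFReal_mul_polar, hfr]

/-- The value comes from the case `f = 1` of the polar decomposition: the Gaussian has mass `1`. -/
theorem integral_radial_gaussian (hv : v ≠ 0) :
    ∫ r in Ioi (0 : ℝ), r * ((2 * π * v)⁻¹ * Real.exp (-r ^ 2 / (2 * v))) = (2 * π)⁻¹ := by
  have mass := integral_gaussianReal_prod_eq_radial_smul_angular (f := fun _ ↦ (1 : ℝ)) hv
    fun _ _ _ ↦ rfl
  have length : volume.real (Ioo (-π) π) = 2 * π := by
    rw [Real.volume_real_Ioo_of_le (by linarith [Real.pi_pos])]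
    ring
  simp only [integral_const, probReal_univ, measureReal_restrict_apply_univ, length, smul_eq_mul,
    mul_one] at mass
  exact eq_inv_of_mul_eq_one_left mass.symm

theorem integral_gaussianReal_prod_of_scaleInvariant (hv : v ≠ 0)
    (hf : ∀ r > (0 : ℝ), ∀ p, f (r • p) = f p) (t : ℝ) :
    ∫ p, f p ∂(gaussianReal 0 v).prod (gaussianReal 0 v) =
      (2 * π)⁻¹ • ∫ θ in t..t + 2 * π, f (Real.cos θ, Real.sin θ) := by
  have periodic : Function.Periodic (fun θ ↦ f (Real.cos θ, Real.sin θ)) (2 * π) := fun θ ↦ by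
    simp only [Real.cos_add_two_pi, Real.sin_add_two_pi]
  rw [integral_gaussianReal_prod_eq_radial_smul_angular hv hf, integral_radial_gaussian hv,
    periodic.intervalIntegral_add_eq t (-π), show -π + 2 * π = π by ring,
    intervalIntegral.integral_of_le (by linarith [Real.pi_pos]), integral_Ioc_eq_integral_Ioo]

theorem gaussianReal_prod_real_cone {S : Set (ℝ × ℝ)} (hv : v ≠ 0) (hS : MeasurableSet S)
    (hcone : ∀ r > (0 : ℝ), ∀ p, r • p ∈ S ↔ p ∈ S) (t : ℝ) :
    ((gaussianReal 0 v).prod (gaussianReal 0 v)).real S =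
      volume.real {θ ∈ Ioc t (t + 2 * π) | (Real.cos θ, Real.sin θ) ∈ S} / (2 * π) := by
  have angles_meas : MeasurableSet {θ : ℝ | (Real.cos θ, Real.sin θ) ∈ S} :=
    hS.preimage (by fun_prop)
  have angular : ∫ θ in t..t + 2 * π, S.indicator (1 : ℝ × ℝ → ℝ) (Real.cos θ, Real.sin θ) =
      volume.real {θ ∈ Ioc t (t + 2 * π) | (Real.cos θ, Real.sin θ) ∈ S} := by
    rw [intervalIntegral.integral_of_le (by linarith [Real.pi_pos]), ofPred_and, inter_comm,
      ← measureReal_restrict_apply angles_meas]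
    exact integral_indicator_one angles_meas
  rw [← integral_indicator_one hS, integral_gaussianReal_prod_of_scaleInvariant hv _ t, angular,
    smul_eq_mul, inv_mul_eq_div]
  exact fun r hr p ↦ indicator_eq_indicator (hcone r hr p) rfl

end PolarCoordinates

section HalfPlanes

/-- The open half-plane through the origin whose inner normal `(cos a, sin a)` has polar angle `a`,
the event that the coordinate of a random vector in that direction is positive. -/
def halfPlane (a : ℝ) : Set (ℝ × ℝ) := {p | 0 < Real.cos a * p.1 + Real.sin a * p.2}

theorem measurableSet_halfPlane (a : ℝ) : MeasurableSet (halfPlane a) :=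
  measurableSet_lt measurable_const (by fun_prop)

theorem smul_mem_halfPlane_iff {r : ℝ} (hr : 0 < r) (a : ℝ) (p : ℝ × ℝ) :
    r • p ∈ halfPlane a ↔ p ∈ halfPlane a := by
  simp only [halfPlane, mem_ofPred_eq, Prod.smul_fst, Prod.smul_snd, smul_eq_mul]
  rw [mul_left_comm _ r, mul_left_comm _ r, ← mul_add, mul_pos_iff_of_pos_left hr]

theorem cos_sin_mem_halfPlane_iff (a θ : ℝ) :
    (Real.cos θ, Real.sin θ) ∈ halfPlane a ↔ 0 < Real.cos (θ - a) := by
  simp only [halfPlane, mem_ofPred_eq, Real.cos_sub, mul_comm]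

theorem cos_pos_iff_mem_Ioo {x : ℝ} (hx : x ∈ Icc (-(3 * π / 2)) (3 * π / 2)) :
    0 < Real.cos x ↔ x ∈ Ioo (-(π / 2)) (π / 2) := by
  refine ⟨fun hcos ↦ abs_lt.1 (lt_of_not_ge fun hge ↦ ?_), Real.cos_pos_of_mem_Ioo⟩
  have hle : |x| ≤ π + π / 2 := (abs_le.2 hx).trans_eq (by ring)
  exact hcos.not_ge (Real.cos_abs x ▸ Real.cos_nonpos_of_pi_div_two_le_of_le hge hle)

theorem angles_halfPlane_inter_eq_Ioo {a b : ℝ} (hab : a ≤ b) (hba : b ≤ a + π) :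
    {θ ∈ Ioc (a - π) (a - π + 2 * π) | (Real.cos θ, Real.sin θ) ∈ halfPlane a ∩ halfPlane b} =
      Ioo (b - π / 2) (a + π / 2) := by
  have hpi := Real.pi_pos
  ext θ
  simp only [mem_ofPred_eq, mem_inter_iff, cos_sin_mem_halfPlane_iff]
  constructor
  · rintro ⟨⟨hlo, hhi⟩, ha, hb⟩
    have ha' := (cos_pos_iff_mem_Ioo ⟨by linarith, by linarith⟩).1 ha
    have hb' := (cos_pos_iff_mem_Ioo ⟨by linarith [ha'.1], by linarith⟩).1 hb
    exact ⟨by linarith [hb'.1], by linarith [ha'.2]⟩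
  · rintro ⟨hlo, hhi⟩
    exact ⟨⟨by linarith, by linarith⟩, Real.cos_pos_of_mem_Ioo ⟨by linarith, by linarith⟩,
      Real.cos_pos_of_mem_Ioo ⟨by linarith, by linarith⟩⟩

theorem gaussianReal_prod_real_halfPlane_inter {v : ℝ≥0} (hv : v ≠ 0) {a b : ℝ} (hab : a ≤ b)
    (hba : b ≤ a + π) :
    ((gaussianReal 0 v).prod (gaussianReal 0 v)).real (halfPlane a ∩ halfPlane b) =
      (π - (b - a)) / (2 * π) := by
  rw [gaussianReal_prod_real_cone hv
      ((measurableSet_halfPlane a).inter (measurableSet_halfPlane b))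
      (fun r hr p ↦ and_congr (smul_mem_halfPlane_iff hr a p) (smul_mem_halfPlane_iff hr b p))
      (a - π),
    angles_halfPlane_inter_eq_Ioo hab hba, Real.volume_real_Ioo_of_le (by linarith)]
  ring

theorem gaussianReal_prod_real_halfPlane {v : ℝ≥0} (hv : v ≠ 0) (a : ℝ) :
    ((gaussianReal 0 v).prod (gaussianReal 0 v)).real (halfPlane a) = 1 / 2 := by
  have h := gaussianReal_prod_real_halfPlane_inter hv (le_refl a) (by linarith [Real.pi_pos])
  rw [inter_self, sub_self, sub_zero] at h
  rw [h]
  field_simp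

end HalfPlanes

section Covariance

variable {Ω : Type*} [MeasurableSpace Ω] {μ : Measure Ω}

theorem cov_indicator_comp {S : Type*} [MeasurableSpace S] {ν : Measure S} {T : Ω → S}
    (hT : HasLaw T ν μ) {A B : Set S} (hA : MeasurableSet A) (hB : MeasurableSet B) :
    cov μ (fun ω ↦ A.indicator 1 (T ω)) (fun ω ↦ B.indicator 1 (T ω)) =
      ν.real (A ∩ B) - ν.real A * ν.real B := by
  have expectation {C : Set S} (hC : MeasurableSet C) :
      ∫ ω, C.indicator (1 : S → ℝ) (T ω) ∂μ = ν.real C := by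
    rw [← integral_indicator_one hC]
    exact hT.integral_comp (measurable_one.indicator hC).aestronglyMeasurable
  have mul_eq (ω : Ω) : A.indicator (1 : S → ℝ) (T ω) * B.indicator 1 (T ω) =
      (A ∩ B).indicator 1 (T ω) := by
    rw [inter_indicator_one, Pi.mul_apply]
  simp only [cov, mul_eq, expectation hA, expectation hB, expectation (hA.inter hB)]

theorem cov_indicator_halfPlane {T : Ω → ℝ × ℝ} {v : ℝ≥0} (hv : v ≠ 0)
    (hT : HasLaw T ((gaussianReal 0 v).prod (gaussianReal 0 v)) μ) {a b : ℝ} (hab : a ≤ b)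
    (hba : b ≤ a + π) :
    cov μ (fun ω ↦ (halfPlane a).indicator 1 (T ω)) (fun ω ↦ (halfPlane b).indicator 1 (T ω)) =
      (π / 2 - (b - a)) / (2 * π) := by
  rw [cov_indicator_comp hT (measurableSet_halfPlane a) (measurableSet_halfPlane b),
    gaussianReal_prod_real_halfPlane_inter hv hab hba, gaussianReal_prod_real_halfPlane hv,
    gaussianReal_prod_real_halfPlane hv]
  field_simp
  ring

end Covariance

theorem cov_median_dichotomies_eq_arcsin
    {Ω : Type*} [MeasurableSpace Ω] (μ : Measure Ω) [IsProbabilityMeasure μ]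
    (X Z : Ω → ℝ) (hX : Measurable X) (hZ : Measurable Z)
    (hXlaw : Measure.map X μ = gaussianReal 0 1)
    (hZlaw : Measure.map Z μ = gaussianReal 0 1)
    (hIndep : IndepFun X Z μ)
    (ρ : ℝ) (hρ : ρ ∈ Set.Ioo (-1 : ℝ) 1)
    (Y : Ω → ℝ) (hY : Y = fun ω => ρ * X ω + Real.sqrt (1 - ρ ^ 2) * Z ω)
    (V W : Ω → ℝ) (hV : V = fun ω => if X ω > 0 then (1 : ℝ) else 0)
    (hW : W = fun ω => if Y ω > 0 then (1 : ℝ) else 0) :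
    cov μ V W = Real.arcsin ρ / (2 * Real.pi) := by
  have hT : HasLaw (fun ω ↦ (X ω, Z ω)) ((gaussianReal 0 1).prod (gaussianReal 0 1)) μ :=
    hIndep.hasLaw_prod ⟨hX.aemeasurable, hXlaw⟩ ⟨hZ.aemeasurable, hZlaw⟩
  have hV' : V = fun ω ↦ (halfPlane 0).indicator 1 (X ω, Z ω) := by
    simp [hV, halfPlane, indicator]
  have hW' : W = fun ω ↦ (halfPlane (Real.arccos ρ)).indicator 1 (X ω, Z ω) := by
    simp [hW, hY, halfPlane, indicator, Real.cos_arccos hρ.1.le hρ.2.le, Real.sin_arccos]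
  rw [hV', hW', cov_indicator_halfPlane one_ne_zero hT (Real.arccos_nonneg ρ)
    (by simpa using Real.arccos_le_pi ρ), Real.arcsin_eq_pi_div_two_sub_arccos, sub_zero]
end

section
/- Let X and Z be independent standard normal random variables, let ρ ∈ (−1, 1), and define Y = ρ·X + √(1 − ρ²)·Z. Then the positive-orthant probability satisfies P(X > 0, Y > 0) = 1/4 + arcsin(ρ)/(2π). -/
open MeasureTheory ProbabilityTheory

/-!
Over the standard Gaussian law of `(X, Z)`, as over any probability measure on the plane with a
rotation-invariant density, the polar angle is uniform on `(-π, π)`. Writing `ρ = sin α` and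
`√(1 - ρ²) = cos α`, the point `(X, Z) = (r cos θ, r sin θ)` satisfies `Y = r sin (θ + α)`, so the
event `X > 0, Y > 0` is the sector `-α < θ < π / 2`, whose share of the full turn is
`(π / 2 + α) / (2π)`.
-/

open Set Real
open scoped ENNReal NNReal

/-- The measure on the plane whose density at distance `r` from the origin is `g (r ^ 2)`. Taking
the squared distance as argument keeps square roots out of the Gaussian density. -/
noncomputable def radialMeasure (g : ℝ → ℝ≥0∞) : Measure (ℝ × ℝ) :=
  volume.withDensity fun p => g (p.1 ^ 2 + p.2 ^ 2)

lemma gaussianReal_prod_gaussianReal_eq_radialMeasure {v : ℝ≥0} (hv : v ≠ 0) :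
    (gaussianReal 0 v).prod (gaussianReal 0 v) =
      radialMeasure fun t => ENNReal.ofReal ((2 * π * v)⁻¹ * exp (-t / (2 * v))) := by
  rw [gaussianReal_of_var_ne_zero _ hv,
    prod_withDensity (measurable_gaussianPDF _ _) (measurable_gaussianPDF _ _), radialMeasure,
    Measure.volume_eq_prod]
  congr 1 with p
  rw [gaussianPDF, gaussianPDF, ← ENNReal.ofReal_mul (gaussianPDFReal_nonneg _ _ _)]
  simp only [gaussianPDFReal, sub_zero]
  rw [mul_mul_mul_comm, ← exp_add, ← mul_inv, mul_self_sqrt (by positivity), ← add_div, neg_add]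

section PolarAngle

lemma measurable_polarCoord_snd : Measurable fun p : ℝ × ℝ => (polarCoord p).2 :=
  Complex.measurable_arg.comp Complex.measurableEquivRealProd.symm.measurable

variable {g : ℝ → ℝ≥0∞}

lemma map_polarCoord_snd_radialMeasure (hg : Measurable g) :
    (radialMeasure g).map (fun p => (polarCoord p).2) =
      (∫⁻ r in Ioi (0 : ℝ), ENNReal.ofReal r * g (r ^ 2)) • volume.restrict (Ioo (-π) π) := by
  ext s hs
  have hs' := measurable_polarCoord_snd hs
  have polar_integrand : ∀ q ∈ polarCoord.target,
      ENNReal.ofReal q.1 • ((fun p => (polarCoord p).2) ⁻¹' s).indicator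
        (fun p => g (p.1 ^ 2 + p.2 ^ 2)) (polarCoord.symm q) =
      ENNReal.ofReal q.1 * g (q.1 ^ 2) * s.indicator 1 q.2 := by
    rintro ⟨r, θ⟩ hq
    have norm_sq : (r * cos θ) ^ 2 + (r * sin θ) ^ 2 = r ^ 2 := by
      linear_combination r ^ 2 * cos_sq_add_sin_sq θ
    have angle : (polarCoord (r * cos θ, r * sin θ)).2 = θ :=
      congrArg Prod.snd (polarCoord.right_inv hq)
    by_cases hθ : θ ∈ s <;> simp [-polarCoord_apply, indicator, angle, norm_sq, hθ]
  calc (radialMeasure g).map (fun p => (polarCoord p).2) s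
    _ = ∫⁻ p, ((fun p => (polarCoord p).2) ⁻¹' s).indicator
          (fun p => g (p.1 ^ 2 + p.2 ^ 2)) p := by
      rw [Measure.map_apply measurable_polarCoord_snd hs, radialMeasure, withDensity_apply _ hs',
        lintegral_indicator hs']
    _ = ∫⁻ q in Ioi (0 : ℝ) ×ˢ Ioo (-π) π,
          ENNReal.ofReal q.1 * g (q.1 ^ 2) * s.indicator 1 q.2 := by
      rw [← lintegral_comp_polarCoord_symm,
        setLIntegral_congr_fun polarCoord.open_target.measurableSet polar_integrand,
        polarCoord_target]
    _ = (∫⁻ r in Ioi (0 : ℝ), ENNReal.ofReal r * g (r ^ 2)) *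
          ∫⁻ θ in Ioo (-π) π, s.indicator 1 θ := by
      rw [Measure.volume_eq_prod, ← Measure.prod_restrict]
      exact lintegral_prod_mul (f := fun r => ENNReal.ofReal r * g (r ^ 2)) (by fun_prop)
        (measurable_one.indicator hs).aemeasurable
    _ = _ := by
      rw [lintegral_indicator_one hs, Measure.smul_apply, smul_eq_mul]

lemma isUniform_polarCoord_snd_radialMeasure (hg : Measurable g)
    [IsProbabilityMeasure (radialMeasure g)] :
    pdf.IsUniform (fun p => (polarCoord p).2) (Ioo (-π) π) (radialMeasure g) := by
  have map_eq := map_polarCoord_snd_radialMeasure hg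
  -- The radial integral is determined by the total mass, so it need not be computed.
  have total_mass :
      (∫⁻ r in Ioi (0 : ℝ), ENNReal.ofReal r * g (r ^ 2)) * volume (Ioo (-π) π) = 1 := by
    have := Measure.isProbabilityMeasure_map (μ := radialMeasure g)
      measurable_polarCoord_snd.aemeasurable
    simpa only [map_eq, Measure.smul_apply, Measure.restrict_apply_univ, smul_eq_mul] using
      measure_univ (μ := (radialMeasure g).map fun p => (polarCoord p).2)
  rw [pdf.IsUniform, map_eq, ProbabilityTheory.cond, ENNReal.eq_inv_of_mul_eq_one_left total_mass]

end PolarAngle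

lemma cos_pos_and_sin_add_pos_iff {α θ : ℝ} (hα : α ∈ Icc (-(π / 2)) (π / 2))
    (hθ : θ ∈ Icc (-π) π) :
    0 < cos θ ∧ 0 < sin (θ + α) ↔ θ ∈ Ioo (-α) (π / 2) := by
  obtain ⟨hα₁, hα₂⟩ := hα
  obtain ⟨hθ₁, hθ₂⟩ := hθ
  constructor
  · rintro ⟨hcos, hsin⟩
    have abs_lt_pi_div_two : |θ| < π / 2 := by
      by_contra! h
      rw [← cos_abs] at hcos
      exact hcos.not_ge (cos_nonpos_of_pi_div_two_le_of_le h
        (by linarith [abs_le.2 ⟨hθ₁, hθ₂⟩, pi_pos]))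
    obtain ⟨hθ₃, hθ₄⟩ := abs_lt.1 abs_lt_pi_div_two
    refine ⟨?_, hθ₄⟩
    by_contra! h
    exact hsin.not_ge (sin_nonpos_of_nonpos_of_neg_pi_le (by linarith) (by linarith))
  · rintro ⟨h₁, h₂⟩
    exact ⟨cos_pos_of_mem_Ioo ⟨by linarith, h₂⟩,
      sin_pos_of_pos_of_lt_pi (by linarith) (by linarith)⟩

lemma fst_pos_and_sin_mul_add_cos_mul_pos_iff {α : ℝ} (hα : α ∈ Icc (-(π / 2)) (π / 2))
    {p : ℝ × ℝ} (hp : p ∈ polarCoord.source) :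
    0 < p.1 ∧ 0 < sin α * p.1 + cos α * p.2 ↔ (polarCoord p).2 ∈ Ioo (-α) (π / 2) := by
  have hq := polarCoord.map_source hp
  rw [← polarCoord.left_inv hp, polarCoord.right_inv hq]
  generalize polarCoord p = q at hq
  obtain ⟨r, θ⟩ := q
  obtain ⟨hr : 0 < r, hθ⟩ := hq
  have rotate : sin α * (r * cos θ) + cos α * (r * sin θ) = r * sin (θ + α) := by
    rw [sin_add]; ring
  rw [← cos_pos_and_sin_add_pos_iff hα (Ioo_subset_Icc_self hθ), polarCoord_symm_apply, rotate,
    mul_pos_iff_of_pos_left hr, mul_pos_iff_of_pos_left hr]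

lemma radialMeasure_real_sector {g : ℝ → ℝ≥0∞} (hg : Measurable g)
    [IsProbabilityMeasure (radialMeasure g)] {α : ℝ} (hα : α ∈ Icc (-(π / 2)) (π / 2)) :
    (radialMeasure g).real {p | 0 < p.1 ∧ 0 < sin α * p.1 + cos α * p.2} =
      1 / 4 + α / (2 * π) := by
  obtain ⟨hα₁, hα₂⟩ := hα
  have volume_Ioo : volume (Ioo (-π) π) = ENNReal.ofReal (2 * π) := by
    rw [Real.volume_Ioo]; ring_nf
  have sector_ae_eq : {p : ℝ × ℝ | 0 < p.1 ∧ 0 < sin α * p.1 + cos α * p.2} =ᵐ[radialMeasure g]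
      (fun p => (polarCoord p).2) ⁻¹' Ioo (-α) (π / 2) := by
    refine (withDensity_absolutelyContinuous _ _).ae_eq ?_
    filter_upwards [Filter.eventuallyEq_univ.1 polarCoord_source_ae_eq_univ] with p hp
    exact propext (fst_pos_and_sin_mul_add_cos_mul_pos_iff ⟨hα₁, hα₂⟩ hp)
  rw [measureReal_congr sector_ae_eq, measureReal_def,
    (isUniform_polarCoord_snd_radialMeasure hg).measure_preimage
      (by simp [pi_pos]) (by simp) measurableSet_Ioo,
    inter_eq_right.2 (Ioo_subset_Ioo (by linarith) (by linarith [pi_pos])), volume_Ioo,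
    Real.volume_Ioo, ENNReal.toReal_div, ENNReal.toReal_ofReal (by linarith),
    ENNReal.toReal_ofReal (by positivity)]
  field_simp
  ring

theorem positive_orthant_probability_general
    {Ω : Type*} [MeasurableSpace Ω] {μ : Measure Ω} [IsProbabilityMeasure μ]
    {X Z : Ω → ℝ} {g : ℝ → ℝ≥0∞} (hg : Measurable g)
    (hlaw : HasLaw (fun ω => (X ω, Z ω)) (radialMeasure g) μ)
    {ρ : ℝ} (hρ : ρ ∈ Icc (-1 : ℝ) 1)
    {Y : Ω → ℝ} (hY : Y = fun ω => ρ * X ω + √(1 - ρ ^ 2) * Z ω) :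
    (μ {ω | X ω > 0 ∧ Y ω > 0}).toReal = 1 / 4 + arcsin ρ / (2 * π) := by
  have : IsProbabilityMeasure (radialMeasure g) := hlaw.isProbabilityMeasure_iff.1 inferInstance
  have sector_meas : MeasurableSet {p : ℝ × ℝ | 0 < p.1 ∧ 0 < ρ * p.1 + √(1 - ρ ^ 2) * p.2} := by
    measurability
  subst hY
  rw [← radialMeasure_real_sector hg (arcsin_mem_Icc ρ), sin_arcsin hρ.1 hρ.2, cos_arcsin]
  exact hlaw.measureReal_eq sector_meas

theorem positive_orthant_probability
    {Ω : Type*} [MeasurableSpace Ω] (μ : Measure Ω) [IsProbabilityMeasure μ]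
    (X Z : Ω → ℝ) (hX : Measurable X) (hZ : Measurable Z)
    (hXlaw : Measure.map X μ = gaussianReal 0 1)
    (hZlaw : Measure.map Z μ = gaussianReal 0 1)
    (hIndep : IndepFun X Z μ)
    (ρ : ℝ) (hρ : ρ ∈ Set.Ioo (-1 : ℝ) 1)
    (Y : Ω → ℝ) (hY : Y = fun ω => ρ * X ω + Real.sqrt (1 - ρ ^ 2) * Z ω) :
    (μ {ω | X ω > 0 ∧ Y ω > 0}).toReal = 1 / 4 + Real.arcsin ρ / (2 * Real.pi) := by
  have hlaw := hIndep.hasLaw_prod ⟨hX.aemeasurable, hXlaw⟩ ⟨hZ.aemeasurable, hZlaw⟩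
  rw [gaussianReal_prod_gaussianReal_eq_radialMeasure one_ne_zero] at hlaw
  exact positive_orthant_probability_general (by fun_prop) hlaw (Ioo_subset_Icc_self hρ) hY
end

section
/- Let X and Z be independent standard normal random variables, let ρ ∈ (−1, 1), and for r ∈ [0,1) define Y_r = r·X + √(1 − r²)·Z. Then for all real numbers s and t, P(X > s, Y_ρ > t) − P(X > s)·P(Y_ρ > t) = ∫₀^ρ (2π√(1 − r²))^{−1} · exp(−(s² − 2rst + t²)/(2(1 − r²))) dr; that is, the covariance of the threshold indicators 1_{X > s} and 1_{Y_ρ > t} equals the integral of the standard bivariate normal density ψ(s, t, r) over correlations r from 0 to ρ. -/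
open MeasureTheory ProbabilityTheory

/-!
Conditionally on `X = x` the variable `Y_r` is Gaussian with mean `r x` and variance `1 - r²`, so
`P(X > s, Y_r > t)` is the integral over `x > s` of a Gaussian tail. The `r`-derivative of that tail
is a normal density times `(x - r t) / (1 - r²)`. Exchanging the roles of the two coordinates in the
bivariate density turns the integrand into a total `x`-derivative, so that
`∂/∂r P(X > s, Y_r > t) = ψ(s, t, r)` (Plackett's identity). It remains to integrate from `0`, where
the two coordinates are independent, to `ρ`.
-/

open Set Filter
open scoped NNReal Topology

section GaussianDensity

variable (m : ℝ) (v : ℝ≥0)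

lemma gaussianPDFReal_le (x : ℝ) : gaussianPDFReal m v x ≤ (√(2 * Real.pi * v))⁻¹ := by
  refine mul_le_of_le_one_right (by positivity) (Real.exp_le_one_iff.2 ?_)
  exact div_nonpos_of_nonpos_of_nonneg (neg_nonpos.2 (sq_nonneg _)) (by positivity)

lemma gaussianPDFReal_eq_inv_sqrt_mul (x : ℝ) :
    gaussianPDFReal m v x = (√v)⁻¹ * gaussianPDFReal 0 1 ((x - m) / √v) := by
  have hexp : -(x - m) ^ 2 / (2 * v) = -((x - m) / √v) ^ 2 / 2 := by
    rw [div_pow, Real.sq_sqrt v.coe_nonneg]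
    ring
  simp only [gaussianPDFReal, hexp, Real.sqrt_mul' _ v.coe_nonneg, NNReal.coe_one, mul_one,
    sub_zero]
  ring

lemma hasDerivAt_gaussianPDFReal (x : ℝ) :
    HasDerivAt (gaussianPDFReal m v) (-((x - m) / v * gaussianPDFReal m v x)) x := by
  have hexponent : HasDerivAt (fun x : ℝ ↦ -(x - m) ^ 2 / (2 * v)) (-((x - m) / v)) x :=
    ((((hasDerivAt_id x).sub_const m).pow 2).neg.div_const (2 * v : ℝ)).congr_deriv (by
      simp [neg_div, mul_div_mul_left])
  exact (hexponent.exp.const_mul (√(2 * Real.pi * v))⁻¹).congr_deriv (by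
    rw [gaussianPDFReal]; ring)

lemma continuous_gaussianPDFReal : Continuous (gaussianPDFReal m v) :=
  continuous_iff_continuousAt.2 fun x ↦ (hasDerivAt_gaussianPDFReal m v x).continuousAt

lemma integrable_sub_div_mul_gaussianPDFReal :
    Integrable fun x ↦ (x - m) / v * gaussianPDFReal m v x := by
  rcases eq_or_ne v 0 with rfl | hv
  · simp
  have hmoment :=
    (integrable_mul_exp_neg_mul_sq (b := (2 * v : ℝ)⁻¹) (by positivity)).comp_sub_right m
  refine (hmoment.const_mul ((v : ℝ)⁻¹ * (√(2 * Real.pi * v))⁻¹)).congr (ae_of_all _ fun x ↦ ?_)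
  simp only [gaussianPDFReal]
  ring_nf

lemma integral_Ioi_sub_div_mul_gaussianPDFReal (a : ℝ) :
    ∫ x in Ioi a, (x - m) / v * gaussianPDFReal m v x = gaussianPDFReal m v a := by
  have hderiv (x : ℝ) := hasDerivAt_gaussianPDFReal m v x
  have hint := (integrable_sub_div_mul_gaussianPDFReal m v).neg.integrableOn (s := Ioi a)
  have hlim : Tendsto (gaussianPDFReal m v) atTop (𝓝 0) :=
    tendsto_zero_of_hasDerivAt_of_integrableOn_Ioi (fun x _ ↦ hderiv x) hint
      (integrable_gaussianPDFReal m v).integrableOn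
  simpa [integral_neg] using integral_Ioi_of_hasDerivAt_of_tendsto' (fun x _ ↦ hderiv x) hint hlim

end GaussianDensity

section GaussianTail

lemma hasDerivAt_integral_Ioi {E : Type*} [NormedAddCommGroup E] [NormedSpace ℝ E]
    [CompleteSpace E] {f : ℝ → E} {a : ℝ} (hf : Integrable f) (ha : ContinuousAt f a) :
    HasDerivAt (fun b ↦ ∫ x in Ioi b, f x) (-f a) a := by
  have hsplit : (fun b ↦ ∫ x in Ioi b, f x) = fun b ↦ (∫ x in Ioi a, f x) - ∫ x in a..b, f x :=
    funext fun b ↦ eq_sub_of_add_eq' <|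
      intervalIntegral.integral_interval_add_Ioi hf.integrableOn hf.integrableOn
  rw [hsplit]
  exact (intervalIntegral.integral_hasDerivAt_right hf.intervalIntegrable
    hf.aestronglyMeasurable.stronglyMeasurableAtFilter ha).const_sub _

variable {v : ℝ≥0}

lemma setIntegral_gaussianReal_eq_setIntegral_smul {E : Type*} [NormedAddCommGroup E]
    [NormedSpace ℝ E] (m : ℝ) (hv : v ≠ 0) {A : Set ℝ} (hA : MeasurableSet A) (f : ℝ → E) :
    ∫ x in A, f x ∂gaussianReal m v = ∫ x in A, gaussianPDFReal m v x • f x := by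
  rw [← integral_indicator hA, integral_gaussianReal_eq_integral_smul hv, ← integral_indicator hA]
  simp only [indicator_smul_apply]

lemma gaussianReal_real_eq_setIntegral (m : ℝ) (hv : v ≠ 0) (A : Set ℝ) :
    (gaussianReal m v).real A = ∫ x in A, gaussianPDFReal m v x := by
  rw [measureReal_def, gaussianReal_apply_eq_integral m hv,
    ENNReal.toReal_ofReal (integral_nonneg (gaussianPDFReal_nonneg m v))]

lemma hasDerivAt_gaussianReal_real_Ioi (m : ℝ) (hv : v ≠ 0) (a : ℝ) :
    HasDerivAt (fun b ↦ (gaussianReal m v).real (Ioi b)) (-gaussianPDFReal m v a) a := by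
  simp only [gaussianReal_real_eq_setIntegral m hv]
  exact hasDerivAt_integral_Ioi (integrable_gaussianPDFReal m v)
    (continuous_gaussianPDFReal m v).continuousAt

lemma continuous_gaussianReal_real_Ioi (m : ℝ) (hv : v ≠ 0) :
    Continuous fun b ↦ (gaussianReal m v).real (Ioi b) :=
  continuous_iff_continuousAt.2 fun a ↦ (hasDerivAt_gaussianReal_real_Ioi m hv a).continuousAt

end GaussianTail

section BivariateDensity

/-- The density `ψ(x, y, r)` of the standard bivariate normal law with correlation `r`, meaningful
for `r ^ 2 < 1`. -/
noncomputable def bivariateGaussianPDFReal (r x y : ℝ) : ℝ :=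
  (2 * Real.pi * √(1 - r ^ 2))⁻¹ *
    Real.exp (-(x ^ 2 - 2 * r * x * y + y ^ 2) / (2 * (1 - r ^ 2)))

lemma bivariateGaussianPDFReal_comm (r x y : ℝ) :
    bivariateGaussianPDFReal r x y = bivariateGaussianPDFReal r y x := by
  unfold bivariateGaussianPDFReal
  ring_nf

lemma continuousOn_bivariateGaussianPDFReal (x y : ℝ) :
    ContinuousOn (fun r ↦ bivariateGaussianPDFReal r x y) {r | r ^ 2 < 1} := by
  unfold bivariateGaussianPDFReal
  have hpos (r : ℝ) (hr : r ∈ {r : ℝ | r ^ 2 < 1}) : 0 < 1 - r ^ 2 := sub_pos.2 hr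
  refine (ContinuousOn.inv₀ (by fun_prop) fun r hr ↦ ?_).mul
    (ContinuousOn.rexp (.div (by fun_prop) (by fun_prop) fun r hr ↦ ?_))
  · have := Real.sqrt_pos.2 (hpos r hr)
    positivity
  · exact (mul_pos two_pos (hpos r hr)).ne'

variable {r : ℝ}

lemma bivariateGaussianPDFReal_eq_mul (hr : r ^ 2 < 1) (x y : ℝ) :
    bivariateGaussianPDFReal r x y =
      gaussianPDFReal 0 1 x * gaussianPDFReal (r * x) (1 - r ^ 2).toNNReal y := by
  have hc : 0 < 1 - r ^ 2 := sub_pos.2 hr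
  have hexp : -(x ^ 2 - 2 * r * x * y + y ^ 2) / (2 * (1 - r ^ 2)) =
      -(x - 0) ^ 2 / (2 * 1) + -(y - r * x) ^ 2 / (2 * (1 - r ^ 2)) := by
    field_simp
    ring
  have hconst : 2 * Real.pi * √(1 - r ^ 2) =
      √(2 * Real.pi * 1) * √(2 * Real.pi * (1 - r ^ 2)) := by
    rw [mul_one, Real.sqrt_mul (by positivity) (1 - r ^ 2), ← mul_assoc,
      Real.mul_self_sqrt (by positivity)]
  simp only [bivariateGaussianPDFReal, gaussianPDFReal, Real.coe_toNNReal _ hc.le, NNReal.coe_one]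
  rw [hexp, hconst, Real.exp_add, mul_inv]
  ring

end BivariateDensity

section ConditionalTail

lemma hasDerivAt_sub_mul_div_sqrt_one_sub_sq {r : ℝ} (hr : r ^ 2 < 1) (t x : ℝ) :
    HasDerivAt (fun r ↦ (t - r * x) / √(1 - r ^ 2))
      (-((√(1 - r ^ 2))⁻¹ * ((x - r * t) / (1 - r ^ 2)))) r := by
  have hc : 0 < 1 - r ^ 2 := sub_pos.2 hr
  have hsqrt : √(1 - r ^ 2) ≠ 0 := (Real.sqrt_pos.2 hc).ne'
  have hnum : HasDerivAt (fun r ↦ t - r * x) (-x) r := by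
    simpa using ((hasDerivAt_id r).mul_const x).const_sub t
  have hvar : HasDerivAt (fun r : ℝ ↦ 1 - r ^ 2) (-(2 * r)) r := by
    simpa using (hasDerivAt_pow 2 r).const_sub 1
  refine (hnum.div (hvar.sqrt hc.ne') hsqrt).congr_deriv ?_
  rw [Real.sq_sqrt hc.le]
  field_simp
  rw [Real.sq_sqrt hc.le]
  ring

/-- The conditional probability `P(Y_r > t | X = x)`, where `Y_r = r X + √(1 - r²) Z` for
independent standard normal `X` and `Z`, written as a tail of `Z`. -/
noncomputable def gaussianCondTail (t r x : ℝ) : ℝ :=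
  (gaussianReal 0 1).real (Ioi ((t - r * x) / √(1 - r ^ 2)))

/-- The `r`-derivative of `gaussianCondTail t r x`, in terms of the conditional density of `Y_r`
given `X = x`. -/
noncomputable def gaussianCondTailDeriv (t r x : ℝ) : ℝ :=
  (x - r * t) / (1 - r ^ 2) * gaussianPDFReal (r * x) (1 - r ^ 2).toNNReal t

lemma gaussianCondTailDeriv_eq_inv_sqrt_mul {r : ℝ} (hr : r ^ 2 < 1) (t x : ℝ) :
    gaussianCondTailDeriv t r x = (√(1 - r ^ 2))⁻¹ * ((x - r * t) / (1 - r ^ 2)) *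
      gaussianPDFReal 0 1 ((t - r * x) / √(1 - r ^ 2)) := by
  rw [gaussianCondTailDeriv, gaussianPDFReal_eq_inv_sqrt_mul,
    Real.coe_toNNReal _ (sub_pos.2 hr).le]
  ring

lemma continuous_gaussianCondTailDeriv (t r : ℝ) : Continuous (gaussianCondTailDeriv t r) := by
  unfold gaussianCondTailDeriv gaussianPDFReal
  fun_prop

lemma continuous_gaussianCondTail (t r : ℝ) : Continuous (gaussianCondTail t r) :=
  (continuous_gaussianReal_real_Ioi 0 one_ne_zero).comp (by fun_prop)

lemma integrable_gaussianCondTail (t r : ℝ) (ν : Measure ℝ) [IsFiniteMeasure ν] :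
    Integrable (gaussianCondTail t r) ν :=
  .of_bound (continuous_gaussianCondTail t r).aestronglyMeasurable 1 <| ae_of_all _ fun x ↦ by
    rw [gaussianCondTail, Real.norm_of_nonneg measureReal_nonneg]
    exact measureReal_le_one

lemma hasDerivAt_gaussianCondTail {r : ℝ} (hr : r ^ 2 < 1) (t x : ℝ) :
    HasDerivAt (fun r ↦ gaussianCondTail t r x) (gaussianCondTailDeriv t r x) r :=
  ((hasDerivAt_gaussianReal_real_Ioi 0 one_ne_zero _).comp r
    (hasDerivAt_sub_mul_div_sqrt_one_sub_sq hr t x)).congr_deriv <| by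
      rw [gaussianCondTailDeriv_eq_inv_sqrt_mul hr]; ring

lemma abs_gaussianCondTailDeriv_le {δ r : ℝ} (hδ : 0 < δ) (hr : δ < 1 - r ^ 2) (t x : ℝ) :
    |gaussianCondTailDeriv t r x| ≤ (|x| + |t|) / δ * (√(2 * Real.pi * δ))⁻¹ := by
  have hc : 0 < 1 - r ^ 2 := hδ.trans hr
  have hrt : |r * t| ≤ |t| := by
    rw [abs_mul]
    exact mul_le_of_le_one_left (abs_nonneg t) ((sq_le_one_iff_abs_le_one r).1 (by linarith))
  have hpdf : gaussianPDFReal (r * x) (1 - r ^ 2).toNNReal t ≤ (√(2 * Real.pi * δ))⁻¹ := by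
    refine (gaussianPDFReal_le _ _ _).trans ?_
    rw [Real.coe_toNNReal _ hc.le]
    gcongr
  rw [gaussianCondTailDeriv, abs_mul, abs_div, abs_of_pos hc,
    abs_of_nonneg (gaussianPDFReal_nonneg _ _ _)]
  gcongr
  · exact gaussianPDFReal_nonneg _ _ _
  · exact (abs_sub _ _).trans (by gcongr)

lemma setIntegral_Ioi_gaussianCondTailDeriv {r : ℝ} (hr : r ^ 2 < 1) (s t : ℝ) :
    ∫ x in Ioi s, gaussianCondTailDeriv t r x ∂gaussianReal 0 1 =
      bivariateGaussianPDFReal r s t := by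
  set w := (1 - r ^ 2).toNNReal with hw
  have hwr : (w : ℝ) = 1 - r ^ 2 := Real.coe_toNNReal _ (sub_pos.2 hr).le
  -- By the Bayes formula, the density of `X` times that of `Y_r` given `X` is the density of `Y_r`
  -- times that of `X` given `Y_r`, whose logarithmic derivative is `-(x - r t) / (1 - r²)`.
  have hbayes (x : ℝ) : gaussianPDFReal 0 1 x • gaussianCondTailDeriv t r x =
      gaussianPDFReal 0 1 t * ((x - r * t) / w * gaussianPDFReal (r * t) w x) := by
    have hfactor := bivariateGaussianPDFReal_eq_mul hr x t
    rw [bivariateGaussianPDFReal_comm, bivariateGaussianPDFReal_eq_mul hr t x, ← hw] at hfactor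
    rw [smul_eq_mul, gaussianCondTailDeriv, ← hw, hwr, mul_left_comm, ← hfactor, mul_left_comm]
  rw [setIntegral_gaussianReal_eq_setIntegral_smul 0 one_ne_zero measurableSet_Ioi]
  simp only [hbayes]
  rw [integral_const_mul, integral_Ioi_sub_div_mul_gaussianPDFReal, bivariateGaussianPDFReal_comm,
    bivariateGaussianPDFReal_eq_mul hr]

lemma hasDerivAt_setIntegral_Ioi_gaussianCondTail {r : ℝ} (hr : r ^ 2 < 1) (s t : ℝ) :
    HasDerivAt (fun r ↦ ∫ x in Ioi s, gaussianCondTail t r x ∂gaussianReal 0 1)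
      (bivariateGaussianPDFReal r s t) r := by
  obtain ⟨δ, hδ, hδr⟩ := exists_between (sub_pos.2 hr)
  have hnhds : {q : ℝ | δ < 1 - q ^ 2} ∈ 𝓝 r :=
    (isOpen_lt continuous_const (by fun_prop)).mem_nhds hδr
  have hbound_int : Integrable (fun x ↦ (|x| + |t|) / δ * (√(2 * Real.pi * δ))⁻¹)
      ((gaussianReal 0 1).restrict (Ioi s)) :=
    (((((memLp_id_gaussianReal 1).integrable le_rfl).abs.add
      (integrable_const _)).div_const _).mul_const _).restrict
  rw [← setIntegral_Ioi_gaussianCondTailDeriv hr]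
  exact (hasDerivAt_integral_of_dominated_loc_of_deriv_le hnhds
    (.of_forall fun q ↦ (continuous_gaussianCondTail t q).aestronglyMeasurable)
    (integrable_gaussianCondTail t r _)
    (continuous_gaussianCondTailDeriv t r).aestronglyMeasurable
    (ae_of_all _ fun x q hq ↦ abs_gaussianCondTailDeriv_le hδ hq t x) hbound_int
    (ae_of_all _ fun x q hq ↦ hasDerivAt_gaussianCondTail (sub_pos.1 (hδ.trans hq)) t x)).2

end ConditionalTail

section OrthantProbability

/-- The upper orthant probability `P(X > s, r X + √(1 - r²) Z > t)` for independent standard normal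
`X` and `Z`, computed under the law of `(X, Z)`. -/
noncomputable def gaussianOrthantProb (s t r : ℝ) : ℝ :=
  ((gaussianReal 0 1).prod (gaussianReal 0 1)).real
    {p : ℝ × ℝ | s < p.1 ∧ t < r * p.1 + √(1 - r ^ 2) * p.2}

lemma measurableSet_lt_fst_and_lt_linear (a b s t : ℝ) :
    MeasurableSet {p : ℝ × ℝ | s < p.1 ∧ t < a * p.1 + b * p.2} :=
  (measurableSet_lt measurable_const measurable_fst).inter <|
    measurableSet_lt measurable_const <|
      (measurable_fst.const_mul a).add (measurable_snd.const_mul b)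

lemma gaussianOrthantProb_zero (s t : ℝ) :
    gaussianOrthantProb s t 0 =
      (gaussianReal 0 1).real (Ioi s) * (gaussianReal 0 1).real (Ioi t) := by
  rw [← measureReal_prod_prod, gaussianOrthantProb]
  congr 1
  ext p
  simp

lemma gaussianOrthantProb_eq_setIntegral {r : ℝ} (hr : r ^ 2 < 1) (s t : ℝ) :
    gaussianOrthantProb s t r = ∫ x in Ioi s, gaussianCondTail t r x ∂gaussianReal 0 1 := by
  have hA := measurableSet_lt_fst_and_lt_linear r (√(1 - r ^ 2)) s t
  rw [gaussianOrthantProb, measureReal_def, Measure.prod_apply hA,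
    ← integral_toReal (measurable_measure_prodMk_left hA).aemeasurable
      (ae_of_all _ fun _ ↦ measure_lt_top _ _), ← integral_indicator measurableSet_Ioi]
  refine integral_congr_ae (ae_of_all _ fun x ↦ ?_)
  by_cases hx : s < x
  · have hsection : Prod.mk x ⁻¹' {p : ℝ × ℝ | s < p.1 ∧ t < r * p.1 + √(1 - r ^ 2) * p.2} =
        Ioi ((t - r * x) / √(1 - r ^ 2)) := by
      ext z
      simp [hx, div_lt_iff₀' (Real.sqrt_pos.2 (sub_pos.2 hr)), sub_lt_iff_lt_add']
    simp [hsection, hx, gaussianCondTail, measureReal_def]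
  · simp [hx]

lemma hasDerivAt_gaussianOrthantProb {r : ℝ} (hr : r ^ 2 < 1) (s t : ℝ) :
    HasDerivAt (gaussianOrthantProb s t) (bivariateGaussianPDFReal r s t) r := by
  have hnhds : ∀ᶠ q : ℝ in 𝓝 r, q ^ 2 < 1 := (continuous_pow 2).tendsto r |>.eventually_lt_const hr
  exact (hasDerivAt_setIntegral_Ioi_gaussianCondTail hr s t).congr_of_eventuallyEq <|
    hnhds.mono fun q hq ↦ gaussianOrthantProb_eq_setIntegral hq s t

lemma integral_bivariateGaussianPDFReal_eq_sub {a b : ℝ} (ha : a ^ 2 < 1) (hb : b ^ 2 < 1)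
    (s t : ℝ) :
    ∫ r in a..b, bivariateGaussianPDFReal r s t =
      gaussianOrthantProb s t b - gaussianOrthantProb s t a := by
  have hsub : uIcc a b ⊆ {r : ℝ | r ^ 2 < 1} := by
    simp only [sq_lt_one_iff_abs_lt_one, abs_lt] at ha hb ⊢
    exact ordConnected_Ioo.uIcc_subset ha hb
  exact intervalIntegral.integral_eq_sub_of_hasDerivAt
    (fun r hr ↦ hasDerivAt_gaussianOrthantProb (hsub hr) s t)
    ((continuousOn_bivariateGaussianPDFReal s t).mono hsub).intervalIntegrable

end OrthantProbability

section RandomVariables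

variable {Ω : Type*} [MeasurableSpace Ω] {μ : Measure Ω} {X Z : Ω → ℝ}

lemma hasLaw_mul_add_sqrt_one_sub_sq_mul (hX : HasLaw X (gaussianReal 0 1) μ)
    (hZ : HasLaw Z (gaussianReal 0 1) μ) (hXZ : IndepFun X Z μ) {r : ℝ} (hr : r ^ 2 ≤ 1) :
    HasLaw (fun ω ↦ r * X ω + √(1 - r ^ 2) * Z ω) (gaussianReal 0 1) μ := by
  have hindep : IndepFun (fun ω ↦ r * X ω) (fun ω ↦ √(1 - r ^ 2) * Z ω) μ :=
    hXZ.comp (measurable_const_mul r) (measurable_const_mul _)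
  have hsum := hindep.hasLaw_fun_add (gaussianReal_const_mul hX r)
    (gaussianReal_const_mul hZ (√(1 - r ^ 2)))
  rw [gaussianReal_conv_gaussianReal] at hsum
  convert hsum using 2
  · simp
  · ext
    simp [Real.sq_sqrt (sub_nonneg.2 hr)]

lemma measureReal_lt_and_lt_eq_gaussianOrthantProb
    (hX : HasLaw X (gaussianReal 0 1) μ) (hZ : HasLaw Z (gaussianReal 0 1) μ)
    (hXZ : IndepFun X Z μ) (s t r : ℝ) :
    μ.real {ω | s < X ω ∧ t < r * X ω + √(1 - r ^ 2) * Z ω} = gaussianOrthantProb s t r :=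
  have := hX.isFiniteMeasure
  (hXZ.hasLaw_prod hX hZ).measureReal_eq (measurableSet_lt_fst_and_lt_linear r (√(1 - r ^ 2)) s t)

end RandomVariables

theorem indicator_cov_eq_integral_of_bivariate_density
    {Ω : Type*} [MeasurableSpace Ω] (μ : Measure Ω) [IsProbabilityMeasure μ]
    (X Z : Ω → ℝ) (hX : Measurable X) (hZ : Measurable Z)
    (hXlaw : Measure.map X μ = gaussianReal 0 1)
    (hZlaw : Measure.map Z μ = gaussianReal 0 1)
    (hIndep : IndepFun X Z μ)
    (ρ : ℝ) (hρ : ρ ∈ Set.Ioo (-1 : ℝ) 1)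
    (Y : ℝ → Ω → ℝ) (hY : ∀ r, Y r = fun ω => r * X ω + Real.sqrt (1 - r ^ 2) * Z ω)
    (s t : ℝ) :
    (μ {ω | X ω > s ∧ Y ρ ω > t}).toReal -
        (μ {ω | X ω > s}).toReal * (μ {ω | Y ρ ω > t}).toReal =
      ∫ r in (0 : ℝ)..ρ,
        (2 * Real.pi * Real.sqrt (1 - r ^ 2))⁻¹ *
          Real.exp (-(s ^ 2 - 2 * r * s * t + t ^ 2) / (2 * (1 - r ^ 2))) := by
  have hρ_sq : ρ ^ 2 < 1 := (sq_lt_one_iff_abs_lt_one ρ).2 (abs_lt.2 hρ)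
  have hX_law : HasLaw X (gaussianReal 0 1) μ := ⟨hX.aemeasurable, hXlaw⟩
  have hZ_law : HasLaw Z (gaussianReal 0 1) μ := ⟨hZ.aemeasurable, hZlaw⟩
  have hY_law : HasLaw (Y ρ) (gaussianReal 0 1) μ :=
    hY ρ ▸ hasLaw_mul_add_sqrt_one_sub_sq_mul hX_law hZ_law hIndep hρ_sq.le
  have hjoint : (μ {ω | X ω > s ∧ Y ρ ω > t}).toReal = gaussianOrthantProb s t ρ :=
    hY ρ ▸ measureReal_lt_and_lt_eq_gaussianOrthantProb hX_law hZ_law hIndep s t ρ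
  have hmarginals : (μ {ω | X ω > s}).toReal * (μ {ω | Y ρ ω > t}).toReal =
      gaussianOrthantProb s t 0 := by
    rw [gaussianOrthantProb_zero]
    exact congrArg₂ _ (hX_law.measureReal_eq measurableSet_Ioi)
      (hY_law.measureReal_eq measurableSet_Ioi)
  rw [hjoint, hmarginals]
  exact (integral_bivariateGaussianPDFReal_eq_sub (by norm_num) hρ_sq s t).symm
end

section
/- For every real number x with |x| ≤ 0.65, the relative error of the linear approximation of arcsine is at most 10%: |arcsin(x) − x| ≤ 0.1·|x|. -/
/-!
Since `sin y ≤ y` for `y ≥ 0`, arcsine lies above the identity on `[0, 1]`, and since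
`y - y ^ 3 / 6 ≤ sin y`, the number `y = (1 + ε) * x` lies above `arcsin x` as soon as
`x ≤ y - y ^ 3 / 6`, that is, `(1 + ε) ^ 3 * x ^ 2 ≤ 6 * ε` when `x > 0`. Oddness of arcsine
takes care of negative `x`. For `ε = 0.1` and `x = 0.65` the two sides are about `0.562` and `0.6`.
-/

theorem self_le_arcsin {x : ℝ} (hx₀ : 0 ≤ x) (hx₁ : x ≤ 1) : x ≤ Real.arcsin x :=
  calc
    x = Real.sin (Real.arcsin x) := (Real.sin_arcsin (by linarith) hx₁).symm
    _ ≤ Real.arcsin x := Real.sin_le (Real.arcsin_nonneg.mpr hx₀)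

theorem arcsin_le_of_le_sub_cube {x y : ℝ} (hy : 0 ≤ y) (hxy : x ≤ y - y ^ 3 / 6) :
    Real.arcsin x ≤ y := by
  rcases lt_or_ge y (Real.pi / 2) with hlt | hge
  · have hmem : y ∈ Set.Ico (-(Real.pi / 2)) (Real.pi / 2) :=
      ⟨by linarith [Real.pi_pos], hlt⟩
    exact (Real.arcsin_le_iff_le_sin' hmem).mpr (hxy.trans (Real.sin_ge_sub_cube hy))
  · exact (Real.arcsin_le_pi_div_two x).trans hge

theorem arcsin_le_one_add_mul {ε x : ℝ} (hε : 0 ≤ ε) (hx : 0 ≤ x)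
    (h : (1 + ε) ^ 3 * x ^ 2 ≤ 6 * ε) : Real.arcsin x ≤ (1 + ε) * x := by
  apply arcsin_le_of_le_sub_cube (by positivity)
  have hcube : ((1 + ε) * x) ^ 3 ≤ 6 * ε * x :=
    calc
      ((1 + ε) * x) ^ 3 = (1 + ε) ^ 3 * x ^ 2 * x := by ring
      _ ≤ 6 * ε * x := by gcongr
  linarith

theorem abs_le_one_of_one_add_pow_three_mul_sq_le {ε x : ℝ} (hε : 0 ≤ ε)
    (h : (1 + ε) ^ 3 * x ^ 2 ≤ 6 * ε) : |x| ≤ 1 := by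
  have hcube : 6 * ε ≤ (1 + ε) ^ 3 := by nlinarith [sq_nonneg (2 * ε - 1), pow_nonneg hε 3]
  rw [← sq_le_one_iff_abs_le_one]
  exact le_of_mul_le_mul_left (by linarith) (by positivity : 0 < (1 + ε) ^ 3)

theorem arcsin_linear_approx_relative_error_general {ε x : ℝ} (hε : 0 ≤ ε)
    (h : (1 + ε) ^ 3 * x ^ 2 ≤ 6 * ε) : |Real.arcsin x - x| ≤ ε * |x| := by
  wlog hx : 0 ≤ x generalizing x
  · have hneg : |Real.arcsin (-x) - -x| ≤ ε * |-x| := this (by rwa [neg_sq]) (by linarith)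
    rwa [Real.arcsin_neg, neg_sub_neg, abs_sub_comm, abs_neg] at hneg
  · have hlower : x ≤ Real.arcsin x :=
      self_le_arcsin hx (le_of_abs_le (abs_le_one_of_one_add_pow_three_mul_sq_le hε h))
    have hupper : Real.arcsin x ≤ (1 + ε) * x := arcsin_le_one_add_mul hε hx h
    rw [abs_of_nonneg (sub_nonneg.mpr hlower), abs_of_nonneg hx]
    linarith

theorem arcsin_linear_approx_relative_error
    (x : ℝ) (hx : |x| ≤ 0.65) : |Real.arcsin x - x| ≤ 0.1 * |x| := by
  have hsq : x ^ 2 ≤ 0.65 ^ 2 := sq_le_sq.mpr (hx.trans (le_abs_self _))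
  exact arcsin_linear_approx_relative_error_general (by norm_num) (by linarith)
end
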